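/- For any t∈ℕ and ε>0 there exists d₀ such that the following holds for all d ≥ d₀. Let G be a graph with a proper linear t-fold edge colouring. Assume that every vertex has degree (1±ε)d and every colour has degree at most (1+ε)d. Then there exists a rainbow matching in G which covers all but at most 4ε|V(G)| vertices. -/

import Mathlib

/-!
Form the `(t + 2)`-uniform hypergraph on the vertices and colours of `G` whose hyperedges consist
of the two ends of an edge together with its `t` colours. Properness and linearity of the colouring
say that two points lie in at most one common hyperedge, so this hypergraph is linear, its maximum
degree is at most `D = (1 + ε) d`, and its matchings are the rainbow matchings of `G`.

The main ingredient (`Nibble.good_of_lt_one`) is a theorem of Rödl nibble type: for every `c < 1`,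
a `k`-uniform linear hypergraph `H` of maximum degree at most `D`, with `D` large, has a matching
of at least `c |H| / D` edges. No regularity is needed. Let `c` be a constant for which this is
known, and take one random bite: activate each edge independently with probability `η / D`, and
kill each vertex that lies in an activated edge, as well as some further vertices by independent
coins that make every vertex survive with probability exactly `q = 1 - η`.

* The activated edges that meet no other activated edge form a matching of expected size at
  least `η (1 - k η) |H| / D` (`Nibble.le_Ex_picked`).
* An edge survives with probability at least `q ^ k`, by positive correlation
  (`Nibble.le_Ex_surv`).
* By linearity of `H`, the survivals at a vertex are almost uncorrelated, so the second moment
  method shows that the surviving degree at most vertices is at most `D' = D (q ^ (k - 1) + δ)`.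
  Deleting the edges at the other vertices loses a negligible proportion (`Nibble.le_Ex_left`).

Applying the statement for `c` to what is left, whose maximum degree is at most `D'`, gives in
total about `(η (1 - k η) + c (1 - η)) |H| / D` edges (`Nibble.Good.step`). As long as
`c < 1 - k η` this improves on `c`, so every constant below `1` is reached after finitely many
bites.

Finally `G` has at least `(1 - ε) d |V| / 2` edges, and for `ε < 1/4` the constant `c = 1 - ε`
suffices; for `ε ≥ 1/4` the empty matching will do.
-/

namespace Nibble

section
open scoped Classical

/-! ### Random subsets with independent elements -/

/-- The expectation of `X S`, where `S` is the random subset of `I` containing each `i ∈ I`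
independently with probability `π i`. -/
noncomputable def Ex {ι : Type} (I : Finset ι) (π : ι → ℝ) (X : Finset ι → ℝ) : ℝ :=
  ∑ S ∈ I.powerset, ((∏ i ∈ S, π i) * ∏ i ∈ I \ S, (1 - π i)) * X S

/-- The real-valued indicator of a proposition. -/
noncomputable def ind (P : Prop) : ℝ := if P then 1 else 0

lemma ind_nonneg (P : Prop) : 0 ≤ ind P := by
  unfold ind; split_ifs <;> norm_num

lemma ind_and (P Q : Prop) : ind (P ∧ Q) = ind P * ind Q := by
  unfold ind; by_cases P <;> by_cases Q <;> simp_all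

lemma card_filter_eq_sum_ind {β : Type} (s : Finset β) (P : β → Prop) [DecidablePred P] :
    ((s.filter P).card : ℝ) = ∑ e ∈ s, ind (P e) := by
  simp only [ind, Finset.card_filter, Nat.cast_sum, Nat.cast_ite, Nat.cast_one, Nat.cast_zero]
  exact Finset.sum_congr rfl fun e _ => by congr

lemma card_mul_le_sum {β : Type} (s : Finset β) (f : β → ℝ) (a : ℝ) (h : ∀ x ∈ s, a ≤ f x) :
    s.card * a ≤ ∑ x ∈ s, f x := by
  rw [← nsmul_eq_mul]
  exact Finset.card_nsmul_le_sum _ _ _ h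

section Ex
variable {ι : Type} {I : Finset ι} {π : ι → ℝ}

lemma Ex_add (X Y : Finset ι → ℝ) :
    Ex I π (fun S => X S + Y S) = Ex I π X + Ex I π Y := by
  simp [Ex, mul_add, Finset.sum_add_distrib]

lemma Ex_sub (X Y : Finset ι → ℝ) :
    Ex I π (fun S => X S - Y S) = Ex I π X - Ex I π Y := by
  simp [Ex, mul_sub, Finset.sum_sub_distrib]

lemma Ex_mul (a : ℝ) (X : Finset ι → ℝ) :
    Ex I π (fun S => a * X S) = a * Ex I π X := by
  simp only [Ex, Finset.mul_sum]
  exact Finset.sum_congr rfl fun _ _ => by ring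

lemma Ex_sum {β : Type} (s : Finset β) (X : β → Finset ι → ℝ) :
    Ex I π (fun S => ∑ b ∈ s, X b S) = ∑ b ∈ s, Ex I π (X b) := by
  simp only [Ex, Finset.mul_sum]
  exact Finset.sum_comm

lemma Ex_disjoint {A : Finset ι} (hA : A ⊆ I) :
    Ex I π (fun S => ind (Disjoint A S)) = ∏ i ∈ A, (1 - π i) := by
  have h := Finset.prod_add (fun i => if i ∈ A then 0 else π i) (fun i => 1 - π i) I
  have h1 : ∏ i ∈ I, ((if i ∈ A then 0 else π i) + (1 - π i)) = ∏ i ∈ A, (1 - π i) := by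
    rw [← Finset.prod_subset hA (f := fun i => (if i ∈ A then 0 else π i) + (1 - π i))]
    · exact Finset.prod_congr rfl fun i hi => by simp [hi]
    · intro i _ hi; simp [hi]
  rw [← h1, h, Ex]
  refine Finset.sum_congr rfl fun S _ => ?_
  by_cases hd : Disjoint A S
  · rw [show ∏ i ∈ S, (if i ∈ A then 0 else π i) = ∏ i ∈ S, π i from
      Finset.prod_congr rfl fun i hi => by simp [Finset.disjoint_right.1 hd hi]]
    simp [ind, hd]
  · obtain ⟨i, hiA, hiS⟩ := Finset.not_disjoint_iff.1 hd
    have h0 : ∏ i ∈ S, (if i ∈ A then 0 else π i) = 0 :=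
      Finset.prod_eq_zero hiS (by simp [hiA])
    rw [h0]
    simp [ind, hd]

lemma Ex_const (a : ℝ) : Ex I π (fun _ => a) = a := by
  have h := Ex_disjoint (I := I) (π := π) (A := ∅) (by simp)
  have h2 := Ex_mul (I := I) (π := π) a (fun S => ind (Disjoint ∅ S))
  rw [h] at h2
  simpa [ind] using h2

lemma Ex_mono (hπ : ∀ i ∈ I, 0 ≤ π i ∧ π i ≤ 1) {X Y : Finset ι → ℝ}
    (h : ∀ S, X S ≤ Y S) : Ex I π X ≤ Ex I π Y := by
  refine Finset.sum_le_sum fun S hS => mul_le_mul_of_nonneg_left (h S) ?_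
  refine mul_nonneg (Finset.prod_nonneg fun i hi => (hπ i (Finset.mem_powerset.1 hS hi)).1)
    (Finset.prod_nonneg fun i hi => ?_)
  linarith [(hπ i (Finset.mem_sdiff.1 hi).1).2]

lemma exists_le_of_le_Ex (hπ : ∀ i ∈ I, 0 ≤ π i ∧ π i ≤ 1) {X : Finset ι → ℝ} {a : ℝ}
    (h : a ≤ Ex I π X) : ∃ S, a ≤ X S := by
  by_contra! hc
  have h0 : ∃ b < a, ∀ S ∈ I.powerset, X S ≤ b := by
    obtain ⟨T, hT, hm⟩ := Finset.exists_max_image I.powerset X ⟨∅, by simp⟩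
    exact ⟨X T, hc T, hm⟩
  obtain ⟨b, hb, hX⟩ := h0
  have h1 : Ex I π X ≤ Ex I π (fun _ => b) := by
    refine Finset.sum_le_sum fun S hS => mul_le_mul_of_nonneg_left (hX S hS) ?_
    refine mul_nonneg (Finset.prod_nonneg fun i hi => (hπ i (Finset.mem_powerset.1 hS hi)).1)
      (Finset.prod_nonneg fun i hi => ?_)
    linarith [(hπ i (Finset.mem_sdiff.1 hi).1).2]
  rw [Ex_const] at h1
  linarith

end Ex

/-! ### Linear uniform hypergraphs -/

variable {α : Type}

/-- The hypergraph `H` is `k`-uniform and linear: two distinct vertices lie in at most one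
common edge. -/
def IsLinear (k : ℕ) (H : Finset (Finset α)) : Prop :=
  (∀ e ∈ H, e.card = k) ∧
    ∀ e ∈ H, ∀ f ∈ H, ∀ x y, x ∈ e → y ∈ e → x ∈ f → y ∈ f → x ≠ y → e = f

/-- The degree of a vertex in a hypergraph. -/
noncomputable def deg (H : Finset (Finset α)) (v : α) : ℕ := (H.filter (v ∈ ·)).card

/-- The edges of `H` that meet `W`. -/
noncomputable def meet (H : Finset (Finset α)) (W : Finset α) : Finset (Finset α) :=
  H.filter (fun f => ¬ Disjoint f W)

lemma card_meet_le (H : Finset (Finset α)) (W : Finset α) :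
    (meet H W).card ≤ ∑ w ∈ W, deg H w := by
  have : meet H W ⊆ W.biUnion (fun w => H.filter (w ∈ ·)) := by
    intro f hf
    simp only [meet, Finset.mem_filter, Finset.not_disjoint_iff] at hf
    obtain ⟨hf, x, hx, hxW⟩ := hf
    simp only [Finset.mem_biUnion, Finset.mem_filter]
    exact ⟨x, hxW, hf, hx⟩
  exact (Finset.card_le_card this).trans Finset.card_biUnion_le

/-- In a linear hypergraph the union bound `card_meet_le` is off by a bounded amount only, since
each pair of vertices of `W` accounts for at most one repeated edge. -/
lemma sum_deg_le {k : ℕ} {H : Finset (Finset α)} (hH : IsLinear k H) (W : Finset α) :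
    ∑ w ∈ W, deg H w ≤ (meet H W).card + W.card ^ 2 := by
  induction W using Finset.induction_on with
  | empty => simp
  | insert w W hw ih =>
    have h1 : meet H (insert w W) = meet H W ∪ H.filter (w ∈ ·) := by
      ext f
      simp only [meet, Finset.mem_filter, Finset.mem_union, Finset.disjoint_insert_right]
      tauto
    have h2 : (meet H W ∩ H.filter (w ∈ ·)).card ≤ W.card := by
      have hs : meet H W ∩ H.filter (w ∈ ·) ⊆
          W.biUnion (fun x => H.filter (fun f => w ∈ f ∧ x ∈ f)) := by
        intro f hf
        simp only [meet, Finset.mem_inter, Finset.mem_filter, Finset.not_disjoint_iff] at hf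
        obtain ⟨⟨hf, x, hx, hxW⟩, -, hwf⟩ := hf
        simp only [Finset.mem_biUnion, Finset.mem_filter]
        exact ⟨x, hxW, hf, hwf, hx⟩
      refine (Finset.card_le_card hs).trans ((Finset.card_biUnion_le_card_mul _ _ 1 ?_).trans
        (by simp))
      intro x hx
      refine Finset.card_le_one.2 fun e he f hf => ?_
      simp only [Finset.mem_filter] at he hf
      exact hH.2 e he.1 f hf.1 w x he.2.1 he.2.2 hf.2.1 hf.2.2 (by rintro rfl; exact hw hx)
    have h3 := Finset.card_union_add_card_inter (meet H W) (H.filter (w ∈ ·))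
    rw [Finset.sum_insert hw, h1, Finset.card_insert_of_notMem hw]
    have h4 : deg H w = (H.filter (w ∈ ·)).card := rfl
    nlinarith

/-! ### One bite of the nibble -/

/-- The ground set of the random choices: one for each edge (its activation) and one for each
vertex (an extra coin that may kill the vertex). -/
noncomputable def gnd (H : Finset (Finset α)) : Finset (Finset α ⊕ α) :=
  H.disjSum (H.biUnion id)

/-- Edges are activated with probability `p`; the coin of a vertex is biased so that the vertex
avoids all activated edges and its own coin with probability exactly `q`. -/
noncomputable def wt (H : Finset (Finset α)) (p q : ℝ) : Finset α ⊕ α → ℝ :=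
  Sum.elim (fun _ => p) (fun v => 1 - q / (1 - p) ^ deg H v)

/-- Every vertex of `W` survives: it lies in no activated edge and its coin does not kill it. -/
def Surv (H : Finset (Finset α)) (W : Finset α) (S : Finset (Finset α ⊕ α)) : Prop :=
  Disjoint ((meet H W).disjSum W) S

lemma surv_union (H : Finset (Finset α)) (W W' : Finset α) (S : Finset (Finset α ⊕ α)) :
    Surv H (W ∪ W') S ↔ Surv H W S ∧ Surv H W' S := by
  have : (meet H (W ∪ W')).disjSum (W ∪ W') =
      (meet H W).disjSum W ∪ (meet H W').disjSum W' := by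
    ext x
    rcases x with x | x
    · simp only [meet, Finset.inl_mem_disjSum, Finset.mem_union, Finset.mem_filter,
        Finset.disjoint_union_right]
      tauto
    · simp
  rw [Surv, this, Finset.disjoint_union_left]; rfl

lemma surv_mono {H : Finset (Finset α)} {W W' : Finset α} {S : Finset (Finset α ⊕ α)}
    (h : W ⊆ W') (hs : Surv H W' S) : Surv H W S := by
  rw [← Finset.union_eq_right.2 h, surv_union] at hs
  exact hs.1

section Bite

variable {k : ℕ} {H : Finset (Finset α)} {p q : ℝ}

lemma Ex_surv (hp : p < 1) {W : Finset α} (hW : W ⊆ H.biUnion id) :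
    Ex (gnd H) (wt H p q) (fun S => ind (Surv H W S)) * (1 - p) ^ (∑ w ∈ W, deg H w) =
      q ^ W.card * (1 - p) ^ (meet H W).card := by
  have h1 : (meet H W).disjSum W ⊆ gnd H :=
    Finset.disjSum_mono (Finset.filter_subset _ _) hW
  unfold Surv
  rw [Ex_disjoint h1, Finset.prod_disjSum]
  simp only [wt, Sum.elim_inl, Sum.elim_inr, Finset.prod_const, sub_sub_cancel,
    Finset.prod_div_distrib, Finset.prod_pow_eq_pow_sum]
  have : (1 - p) ^ (∑ w ∈ W, deg H w) ≠ 0 := pow_ne_zero _ (by linarith)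
  field_simp

lemma le_Ex_surv (hp0 : 0 ≤ p) (hp : p < 1) (hq : 0 ≤ q) {W : Finset α}
    (hW : W ⊆ H.biUnion id) :
    q ^ W.card ≤ Ex (gnd H) (wt H p q) (fun S => ind (Surv H W S)) := by
  have h := Ex_surv (q := q) hp hW
  have h1 : (1 - p) ^ (∑ w ∈ W, deg H w) ≤ (1 - p) ^ (meet H W).card :=
    pow_le_pow_of_le_one (by linarith) (by linarith) (card_meet_le H W)
  have h2 : 0 < (1 - p) ^ (∑ w ∈ W, deg H w) := pow_pos (by linarith) _
  refine le_of_mul_le_mul_right ?_ h2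
  rw [h]
  exact mul_le_mul_of_nonneg_left h1 (by positivity)

lemma Ex_surv_le (hH : IsLinear k H) (hp0 : 0 ≤ p) (hp : p < 1) (hq : 0 ≤ q) {W : Finset α}
    (hW : W ⊆ H.biUnion id) :
    Ex (gnd H) (wt H p q) (fun S => ind (Surv H W S)) * (1 - p) ^ (W.card ^ 2)
      ≤ q ^ W.card := by
  have h := Ex_surv (q := q) hp hW
  have h1 : (1 - p) ^ ((meet H W).card + W.card ^ 2) ≤ (1 - p) ^ (∑ w ∈ W, deg H w) :=
    pow_le_pow_of_le_one (by linarith) (by linarith) (sum_deg_le hH W)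
  have h0 : 0 ≤ Ex (gnd H) (wt H p q) (fun S => ind (Surv H W S)) :=
    le_trans (by positivity) (le_Ex_surv hp0 hp hq hW)
  have h2 : 0 < (1 - p) ^ (meet H W).card := pow_pos (by linarith) _
  refine le_of_mul_le_mul_right ?_ h2
  rw [← h, mul_assoc, ← pow_add, add_comm (W.card ^ 2)]
  exact mul_le_mul_of_nonneg_left h1 h0

/-- The activated edges that meet no other activated edge. -/
noncomputable def picked (H : Finset (Finset α)) (S : Finset (Finset α ⊕ α)) :
    Finset (Finset α) :=
  H.filter (fun e => Sum.inl e ∈ S ∧ ∀ f ∈ H, f ≠ e → ¬ Disjoint f e → Sum.inl f ∉ S)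

lemma le_Ex_picked {D : ℝ} (hH : IsLinear k H) (hD : ∀ v, (deg H v : ℝ) ≤ D)
    (hp0 : 0 ≤ p) (hp : p < 1) :
    H.card * (p * (1 - p * (k * D))) ≤
      Ex (gnd H) (wt H p q) (fun S => ((picked H S).card : ℝ)) := by
  simp only [picked, card_filter_eq_sum_ind, Ex_sum]
  refine card_mul_le_sum _ _ _ fun e he => ?_
  set B : Finset (Finset α) := (meet H e).erase e with hB
  have hBH : B ⊆ H := (Finset.erase_subset _ _).trans (Finset.filter_subset _ _)
  have hBc : (B.card : ℝ) ≤ k * D := by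
    have h1 : B.card ≤ ∑ w ∈ e, deg H w :=
      (Finset.card_le_card (Finset.erase_subset _ _)).trans (card_meet_le H e)
    calc (B.card : ℝ) ≤ ∑ w ∈ e, (deg H w : ℝ) := by exact_mod_cast h1
      _ ≤ ∑ w ∈ e, D := Finset.sum_le_sum fun w _ => hD w
      _ = k * D := by simp [hH.1 e he]
  have key : ∀ S : Finset (Finset α ⊕ α),
      ind (Sum.inl e ∈ S ∧ ∀ f ∈ H, f ≠ e → ¬ Disjoint f e → Sum.inl f ∉ S) =
        ind (Disjoint (B.disjSum ∅) S) - ind (Disjoint ((insert e B).disjSum ∅) S) := by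
    intro S
    have h1 : Disjoint (B.disjSum ∅) S ↔
        ∀ f ∈ H, f ≠ e → ¬ Disjoint f e → Sum.inl f ∉ S := by
      rw [Finset.disjoint_left]
      constructor
      · intro h f hf hfe hd
        exact h (by simp [hB, meet, hf, hfe, hd])
      · rintro h (f | f) hf
        · simp only [hB, meet, Finset.inl_mem_disjSum, Finset.mem_erase,
            Finset.mem_filter] at hf
          exact h f hf.2.1 hf.1 hf.2.2
        · simp at hf
    have h2 : Disjoint ((insert e B).disjSum ∅) S ↔
        Sum.inl e ∉ S ∧ Disjoint (B.disjSum ∅) S := by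
      rw [show (insert e B).disjSum (∅ : Finset α) = insert (Sum.inl e) (B.disjSum ∅) by
        ext (x | x) <;> simp, Finset.disjoint_insert_left]
    rw [h2, h1]
    generalize (∀ f ∈ H, f ≠ e → ¬ Disjoint f e → Sum.inl f ∉ S) = Q
    unfold ind
    by_cases ha : Sum.inl e ∈ S <;> by_cases hQ : Q <;> simp [ha, hQ]
  simp only [key]
  have hbase : ∀ C : Finset (Finset α), C ⊆ H →
      Ex (gnd H) (wt H p q) (fun S => ind (Disjoint (C.disjSum ∅) S)) = (1 - p) ^ C.card := by
    intro C hC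
    have hsub : C.disjSum (∅ : Finset α) ⊆ gnd H := Finset.disjSum_mono hC (by simp)
    rw [Ex_disjoint hsub, Finset.prod_disjSum]
    simp [wt]
  rw [Ex_sub, hbase B hBH, hbase (insert e B) (Finset.insert_subset he hBH),
    Finset.card_insert_of_notMem (by simp [hB]), pow_succ]
  have hbern : 1 - p * B.card ≤ (1 - p) ^ B.card := by
    have := one_add_mul_le_pow (a := -p) (by linarith) B.card
    calc _ = 1 + (B.card : ℝ) * -p := by ring
      _ ≤ _ := this
      _ = _ := by ring
  have : p * (1 - p * (k * D)) ≤ p * (1 - p) ^ B.card := by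
    refine mul_le_mul_of_nonneg_left ?_ hp0
    nlinarith
  linarith

/-- The number of edges at `v` all of whose other vertices survive. -/
noncomputable def resdeg (H : Finset (Finset α)) (v : α) (S : Finset (Finset α ⊕ α)) : ℝ :=
  ∑ e ∈ H.filter (v ∈ ·), ind (Surv H (e.erase v) S)

/-- Second moment bound for `resdeg`: two edges at `v` share no other vertex, so their survivals
are almost uncorrelated. -/
lemma Ex_resdeg_sq_le {D : ℝ} (hH : IsLinear k H) (hD : ∀ v, (deg H v : ℝ) ≤ D)
    (hp0 : 0 ≤ p) (hp : p < 1) (hq : 0 ≤ q) (hq1 : q ≤ 1)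
    (hπ : ∀ i ∈ gnd H, 0 ≤ wt H p q i ∧ wt H p q i ≤ 1) (v : α) :
    Ex (gnd H) (wt H p q) (fun S => (resdeg H v S - deg H v * q ^ (k - 1)) ^ 2) ≤
      D + D ^ 2 * (((1 - p) ^ (4 * k ^ 2))⁻¹ - 1) := by
  set F := H.filter (v ∈ ·) with hF
  set d : ℝ := (deg H v : ℝ) with hd
  have hdF : (F.card : ℝ) = d := rfl
  set u : ℝ := ((1 - p) ^ (4 * k ^ 2))⁻¹ with hu
  have hr : 0 < (1 - p) ^ (4 * k ^ 2) := pow_pos (by linarith) _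
  have hu1 : 1 ≤ u := (one_le_inv₀ hr).2 (pow_le_one₀ (by linarith) (by linarith))
  have hd0 : 0 ≤ d := Nat.cast_nonneg _
  have hmem : ∀ e ∈ F, e.erase v ⊆ H.biUnion id := by
    intro e he x hx
    exact Finset.mem_biUnion.2 ⟨e, (Finset.mem_filter.1 he).1, (Finset.mem_erase.1 hx).2⟩
  have hcard : ∀ e ∈ F, (e.erase v).card = k - 1 := by
    intro e he
    rw [Finset.card_erase_of_mem (Finset.mem_filter.1 he).2, hH.1 e (Finset.mem_filter.1 he).1]
  have hEX : d * q ^ (k - 1) ≤ Ex (gnd H) (wt H p q) (resdeg H v) := by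
    unfold resdeg
    rw [Ex_sum, ← hdF]
    refine card_mul_le_sum _ _ _ fun e he => ?_
    rw [← hcard e he]
    exact le_Ex_surv hp0 hp hq (hmem e he)
  have hEX2 : Ex (gnd H) (wt H p q) (fun S => resdeg H v S ^ 2) ≤
      d + d ^ 2 * ((q ^ (k - 1)) ^ 2 * u) := by
    have hsq : ∀ S, resdeg H v S ^ 2 =
        ∑ e ∈ F, ∑ f ∈ F, ind (Surv H (e.erase v ∪ f.erase v) S) := by
      intro S
      simp only [resdeg, sq, Finset.sum_mul_sum, surv_union, ind_and]
      rfl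
    simp only [hsq, Ex_sum]
    have hpair : ∀ e ∈ F, ∀ f ∈ F,
        Ex (gnd H) (wt H p q) (fun S => ind (Surv H (e.erase v ∪ f.erase v) S)) ≤
          (if e = f then 1 else 0) + (q ^ (k - 1)) ^ 2 * u := by
      intro e he f hf
      split_ifs with hef
      · have h1 : Ex (gnd H) (wt H p q) (fun S => ind (Surv H (e.erase v ∪ f.erase v) S)) ≤
            Ex (gnd H) (wt H p q) (fun _ => 1) :=
          Ex_mono hπ fun S => by unfold ind; split_ifs <;> norm_num
        rw [Ex_const] at h1
        have : 0 ≤ (q ^ (k - 1)) ^ 2 * u := by positivity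
        linarith
      · have hdis : Disjoint (e.erase v) (f.erase v) := by
          rw [Finset.disjoint_left]
          intro x hx hy
          rw [Finset.mem_erase] at hx hy
          rw [hF, Finset.mem_filter] at he hf
          exact hef (hH.2 e he.1 f hf.1 x v hx.2 he.2 hy.2 hf.2 hx.1)
        have hc : (e.erase v ∪ f.erase v).card = 2 * (k - 1) := by
          rw [Finset.card_union_of_disjoint hdis, hcard e he, hcard f hf]; ring
        have h1 := Ex_surv_le hH hp0 hp hq (Finset.union_subset (hmem e he) (hmem f hf))
        rw [hc] at h1
        have h2 : (1 - p) ^ (4 * k ^ 2) ≤ (1 - p) ^ ((2 * (k - 1)) ^ 2) := by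
          refine pow_le_pow_of_le_one (by linarith) (by linarith) ?_
          have : k - 1 ≤ k := Nat.sub_le _ _
          nlinarith
        have h0 : 0 ≤ Ex (gnd H) (wt H p q)
            (fun S => ind (Surv H (e.erase v ∪ f.erase v) S)) :=
          le_trans (by positivity)
            (le_Ex_surv hp0 hp hq (Finset.union_subset (hmem e he) (hmem f hf)))
        rw [zero_add, hu, ← div_eq_mul_inv, le_div_iff₀ hr, ← pow_mul, mul_comm (k - 1)]
        exact (mul_le_mul_of_nonneg_left h2 h0).trans h1
    calc _ ≤ ∑ e ∈ F, ∑ f ∈ F, ((if e = f then 1 else 0) + (q ^ (k - 1)) ^ 2 * u) :=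
          Finset.sum_le_sum fun e he => Finset.sum_le_sum fun f hf => hpair e he f hf
      _ = d + d ^ 2 * ((q ^ (k - 1)) ^ 2 * u) := by
          simp only [Finset.sum_add_distrib, Finset.sum_ite_eq, Finset.sum_const, nsmul_eq_mul,
            hdF]
          rw [Finset.sum_congr rfl (g := fun _ => (1 : ℝ)) (fun x hx => by simp [hx])]
          simp [hdF]; ring
  have hexp : Ex (gnd H) (wt H p q) (fun S => (resdeg H v S - d * q ^ (k - 1)) ^ 2) =
      Ex (gnd H) (wt H p q) (fun S => resdeg H v S ^ 2)
        - 2 * (d * q ^ (k - 1)) * Ex (gnd H) (wt H p q) (resdeg H v)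
        + (d * q ^ (k - 1)) ^ 2 := by
    have hc := Ex_const (I := gnd H) (π := wt H p q) ((d * q ^ (k - 1)) ^ 2)
    rw [← Ex_mul, ← Ex_sub]
    conv_rhs => rw [← hc, ← Ex_add]
    congr 1; ext S; ring
  rw [hexp]
  have hQ : (q ^ (k - 1)) ^ 2 ≤ 1 := pow_le_one₀ (by positivity) (pow_le_one₀ hq hq1)
  have hQ0 : 0 ≤ q ^ (k - 1) := by positivity
  have h1 : (d * q ^ (k - 1)) * (d * q ^ (k - 1)) ≤
      (d * q ^ (k - 1)) * Ex (gnd H) (wt H p q) (resdeg H v) :=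
    mul_le_mul_of_nonneg_left hEX (by positivity)
  have h2 : d ^ 2 * ((q ^ (k - 1)) ^ 2 * (u - 1)) ≤ D ^ 2 * (u - 1) := by
    have : d ^ 2 ≤ D ^ 2 := by gcongr; exact hD v
    have h3 : (q ^ (k - 1)) ^ 2 * (u - 1) ≤ 1 * (u - 1) :=
      mul_le_mul_of_nonneg_right hQ (by linarith)
    calc _ ≤ d ^ 2 * (u - 1) := mul_le_mul_of_nonneg_left (by linarith) (by positivity)
      _ ≤ _ := mul_le_mul_of_nonneg_right this (by linarith)
  have h4 := hD v
  nlinarith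

/-- The hypergraph left after one bite: the surviving edges, without those at a vertex whose
`resdeg` exceeds `D'`. -/
noncomputable def left (H : Finset (Finset α)) (D' : ℝ) (S : Finset (Finset α ⊕ α)) :
    Finset (Finset α) :=
  H.filter (fun e => Surv H e S ∧ ∀ v ∈ e, resdeg H v S ≤ D')

lemma deg_left_le {D' : ℝ} (hD' : 0 ≤ D') (S : Finset (Finset α ⊕ α)) (v : α) :
    (deg (left H D' S) v : ℝ) ≤ D' := by
  rcases Nat.eq_zero_or_pos (deg (left H D' S) v) with h | h
  · simpa [h] using hD'
  · obtain ⟨e, he⟩ := Finset.card_pos.1 h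
    simp only [left, Finset.mem_filter] at he
    refine le_trans ?_ (he.1.2.2 v he.2)
    rw [resdeg, ← card_filter_eq_sum_ind]
    refine Nat.cast_le.2 (Finset.card_le_card fun f hf => ?_)
    simp only [left, Finset.mem_filter] at hf ⊢
    exact ⟨⟨hf.1.1, hf.2⟩, surv_mono (Finset.erase_subset _ _) hf.1.2.1⟩

/-- Markov's inequality for the squared deviation of `resdeg` bounds the loss at vertices of
large residual degree. -/
lemma le_Ex_left {D δ : ℝ} (hH : IsLinear k H) (hD : ∀ v, (deg H v : ℝ) ≤ D) (hD0 : 0 < D)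
    (hδ : 0 < δ) (hp0 : 0 ≤ p) (hp : p < 1) (hq : 0 ≤ q) (hq1 : q ≤ 1)
    (hπ : ∀ i ∈ gnd H, 0 ≤ wt H p q i ∧ wt H p q i ≤ 1) :
    H.card * (q ^ k - k * ((D + D ^ 2 * (((1 - p) ^ (4 * k ^ 2))⁻¹ - 1)) / (δ * D) ^ 2)) ≤
      Ex (gnd H) (wt H p q)
        (fun S => ((left H (D * (q ^ (k - 1) + δ)) S).card : ℝ)) := by
  set T := (D + D ^ 2 * (((1 - p) ^ (4 * k ^ 2))⁻¹ - 1)) / (δ * D) ^ 2 with hT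
  simp only [left, card_filter_eq_sum_ind, Ex_sum]
  refine card_mul_le_sum _ _ _ fun e he => ?_
  set Z : α → Finset (Finset α ⊕ α) → ℝ :=
    fun v S => ((δ * D) ^ 2)⁻¹ * (resdeg H v S - deg H v * q ^ (k - 1)) ^ 2 with hZ
  have hZ0 : ∀ v S, 0 ≤ Z v S := fun v S => by positivity
  have hpt : ∀ S, ind (Surv H e S) - ∑ v ∈ e, Z v S ≤
      ind (Surv H e S ∧ ∀ v ∈ e, resdeg H v S ≤ D * (q ^ (k - 1) + δ)) := by
    intro S
    by_cases hb : ∀ v ∈ e, resdeg H v S ≤ D * (q ^ (k - 1) + δ)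
    · have : 0 ≤ ∑ v ∈ e, Z v S := Finset.sum_nonneg fun v _ => hZ0 v S
      rw [and_iff_left hb]
      linarith
    · push Not at hb
      obtain ⟨v, hv, hvb⟩ := hb
      have h1 : 1 ≤ Z v S := by
        simp only [hZ]
        rw [inv_mul_eq_div, one_le_div (by positivity)]
        have h2 : (deg H v : ℝ) * q ^ (k - 1) ≤ D * q ^ (k - 1) :=
          mul_le_mul_of_nonneg_right (hD v) (by positivity)
        exact pow_le_pow_left₀ (by positivity) (by linarith) 2
      have h2 : Z v S ≤ ∑ v ∈ e, Z v S :=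
        Finset.single_le_sum (f := fun v => Z v S) (fun v _ => hZ0 v S) hv
      have h3 : ind (Surv H e S) ≤ 1 := by unfold ind; split_ifs <;> norm_num
      exact le_trans (by linarith) (ind_nonneg _)
  refine le_trans ?_ (Ex_mono hπ hpt)
  rw [Ex_sub, Ex_sum]
  have h1 : q ^ k ≤ Ex (gnd H) (wt H p q) (fun S => ind (Surv H e S)) := by
    rw [← hH.1 e he]
    exact le_Ex_surv hp0 hp hq (Finset.subset_biUnion_of_mem id he)
  have h2 : ∑ v ∈ e, Ex (gnd H) (wt H p q) (Z v) ≤ k * T := by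
    rw [← hH.1 e he, ← nsmul_eq_mul]
    refine Finset.sum_le_card_nsmul _ _ _ fun v _ => ?_
    rw [hZ, Ex_mul, hT, inv_mul_eq_div]
    exact div_le_div_of_nonneg_right (Ex_resdeg_sq_le hH hD hp0 hp hq hq1 hπ v) (by positivity)
  linarith

end Bite

/-! ### Iterating the bite -/

/-- Every `k`-uniform linear hypergraph of maximum degree at most `D`, with `D` large, has a
matching of at least `c |H| / D` edges. -/
def Good (k : ℕ) (c : ℝ) : Prop :=
  ∃ D₀ : ℝ, ∀ D : ℝ, D₀ ≤ D → ∀ (α : Type) (H : Finset (Finset α)), IsLinear k H →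
    (∀ v, (deg H v : ℝ) ≤ D) →
    ∃ M ⊆ H, (∀ e ∈ M, ∀ f ∈ M, e ≠ f → Disjoint e f) ∧ c * H.card ≤ M.card * D

/-- The ratio tends to `q` as `δ → 0`, so a small error `δ` preserves a strict inequality. -/
lemma exists_delta {k : ℕ} (hk : 1 ≤ k) {q c b a : ℝ} (hq : 0 < q) (h : b < a + c * q) :
    ∃ δ > 0, b < a + c * ((q ^ k - k * δ) / (q ^ (k - 1) + δ)) := by
  have hc : ContinuousAt (fun δ : ℝ => a + c * ((q ^ k - k * δ) / (q ^ (k - 1) + δ))) 0 := by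
    have : q ^ (k - 1) + (0 : ℝ) ≠ 0 := by rw [add_zero]; positivity
    fun_prop (disch := assumption)
  have h0 : a + c * ((q ^ k - k * (0 : ℝ)) / (q ^ (k - 1) + 0)) = a + c * q := by
    obtain ⟨j, rfl⟩ : ∃ j, k = j + 1 := ⟨k - 1, by omega⟩
    have : q ^ j ≠ 0 := by positivity
    simp only [Nat.add_sub_cancel, mul_zero, sub_zero, add_zero, pow_succ]
    field_simp
  have hev := hc.eventually (lt_mem_nhds (a := b) (h.trans_eq h0.symm))
  obtain ⟨ρ, hρ, hball⟩ := Metric.eventually_nhds_iff.1 hev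
  refine ⟨ρ / 2, by positivity, hball ?_⟩
  rw [Real.dist_eq, sub_zero, abs_of_pos (by positivity)]
  linarith

/-- The bound of `le_Ex_left` for the probability of a large residual degree is at most `δ` once
`D` is large. -/
lemma variance_small {k : ℕ} {D δ p : ℝ} (hδ : 0 < δ) (hD1 : 1 ≤ D) (hDk : 8 * k ^ 2 ≤ D)
    (hDδ : (1 + 8 * k ^ 2) / δ ^ 3 ≤ D) (hp : p ≤ 1 / D) (hp1 : p < 1) :
    (D + D ^ 2 * (((1 - p) ^ (4 * k ^ 2))⁻¹ - 1)) / (δ * D) ^ 2 ≤ δ := by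
  have hD0 : 0 < D := by linarith
  set x : ℝ := 4 * k ^ 2 / D with hx
  have hx0 : 0 ≤ x := by positivity
  have hx1 : x ≤ 1 / 2 := by
    rw [hx, div_le_iff₀ hD0]; linarith
  have hr : 1 - x ≤ (1 - p) ^ (4 * k ^ 2) := by
    have h1 := one_add_mul_le_pow (a := -p) (by linarith) (4 * k ^ 2)
    have h2 : (4 * k ^ 2 : ℝ) * p ≤ x := by
      rw [hx, div_eq_mul_one_div]
      exact mul_le_mul_of_nonneg_left hp (by positivity)
    push_cast at h1
    calc 1 - x ≤ 1 + 4 * k ^ 2 * -p := by linarith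
      _ ≤ _ := h1
      _ = _ := by ring
  have hu : ((1 - p) ^ (4 * k ^ 2))⁻¹ ≤ 1 + 2 * x := by
    rw [inv_le_iff_one_le_mul₀ (by linarith)]
    nlinarith
  have hxD : D * x = 4 * k ^ 2 := by rw [hx]; field_simp
  rw [div_le_iff₀ (by positivity)]
  rw [div_le_iff₀ (by positivity)] at hDδ
  have h3 : D ^ 2 * (((1 - p) ^ (4 * k ^ 2))⁻¹ - 1) ≤ D ^ 2 * (2 * x) :=
    mul_le_mul_of_nonneg_left (by linarith) (by positivity)
  calc _ ≤ D + D ^ 2 * (2 * x) := by linarith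
    _ = D * (1 + 2 * (D * x)) := by ring
    _ = D * (1 + 8 * k ^ 2) := by rw [hxD]; ring
    _ ≤ D * (D * δ ^ 3) := mul_le_mul_of_nonneg_left hDδ hD0.le
    _ = _ := by ring

/-- One bite improves the constant: a bite of size `η` contributes `η (1 - k η) |H| / D` matching
edges and leaves a hypergraph whose ratio of edges to degree bound is nearly
`(1 - η) |H| / D`. -/
lemma Good.step {k : ℕ} (hk : 1 ≤ k) {c c' η : ℝ} (hc : 0 ≤ c) (hη : 0 < η) (hη1 : η < 1)
    (hcc : c' < η * (1 - k * η) + c * (1 - η)) (hg : Good k c) : Good k c' := by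
  obtain ⟨D₀, hg⟩ := hg
  obtain ⟨δ, hδ, hcδ⟩ := exists_delta hk (by linarith : 0 < 1 - η) hcc
  set q := 1 - η with hq
  have hq0 : 0 < q := by linarith
  have hq1 : q ≤ 1 := by linarith
  set b := q ^ (k - 1) + δ with hb
  have hb0 : 0 < b := by positivity
  refine ⟨max (max 1 (8 * k ^ 2)) (max ((1 + 8 * k ^ 2) / δ ^ 3) (D₀ / b)), ?_⟩
  intro D hD α H hH hdeg
  simp only [max_le_iff] at hD
  obtain ⟨⟨hD1, hDk⟩, hDδ, hDb⟩ := hD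
  have hD0 : 0 < D := by linarith
  set p := η / D with hp
  have hpD : p * D = η := by rw [hp]; field_simp
  have hp0 : 0 ≤ p := by positivity
  have hpD1 : p ≤ 1 / D := div_le_div_of_nonneg_right hη1.le hD0.le
  have hp1 : p < 1 := by nlinarith
  have hπ : ∀ i ∈ gnd H, 0 ≤ wt H p q i ∧ wt H p q i ≤ 1 := by
    rintro (e | v) -
    · exact ⟨hp0, hp1.le⟩
    · have hr : 0 < (1 - p) ^ deg H v := pow_pos (by linarith) _
      have h1 := one_add_mul_le_pow (a := -p) (by linarith) (deg H v)
      have h2 : p * deg H v ≤ η := by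
        rw [← hpD]; exact mul_le_mul_of_nonneg_left (hdeg v) hp0
      have h3 : q ≤ (1 - p) ^ deg H v := by
        calc q ≤ 1 + (deg H v : ℝ) * -p := by rw [hq]; linarith
          _ ≤ _ := h1
          _ = _ := by ring
      have h4 : q / (1 - p) ^ deg H v ≤ 1 := (div_le_one hr).2 h3
      have h5 : 0 ≤ q / (1 - p) ^ deg H v := by positivity
      simp only [wt, Sum.elim_inr]
      constructor <;> linarith
  have hpick := le_Ex_picked (q := q) hH hdeg hp0 hp1
  have hleft := le_Ex_left hH hdeg hD0 hδ hp0 hp1 hq0.le hq1 hπ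
  have hvar := variance_small hδ hD1 hDk hDδ hpD1 hp1
  set T := (D + D ^ 2 * (((1 - p) ^ (4 * k ^ 2))⁻¹ - 1)) / (δ * D) ^ 2
  have hleft' : H.card * (q ^ k - k * δ) ≤
      Ex (gnd H) (wt H p q) (fun S => ((left H (D * b) S).card : ℝ)) := by
    refine le_trans (mul_le_mul_of_nonneg_left ?_ (Nat.cast_nonneg _)) hleft
    have : (k : ℝ) * T ≤ k * δ := mul_le_mul_of_nonneg_left hvar (Nat.cast_nonneg _)
    linarith
  have hsum : c' * H.card / D ≤ Ex (gnd H) (wt H p q)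
      (fun S => ((picked H S).card : ℝ) + c / (D * b) * ((left H (D * b) S).card : ℝ)) := by
    rw [Ex_add, Ex_mul]
    have h1 := mul_le_mul_of_nonneg_left hleft' (by positivity : 0 ≤ c / (D * b))
    have h2 : c' * H.card / D ≤ H.card * (p * (1 - p * (k * D))) +
        c / (D * b) * (H.card * (q ^ k - k * δ)) := by
      have h3 : H.card * (p * (1 - p * (k * D))) + c / (D * b) * (H.card * (q ^ k - k * δ)) =
          (η * (1 - k * η) + c * ((q ^ k - k * δ) / b)) * H.card / D := by
        rw [show p * (k * D) = k * η by rw [← hpD]; ring, hp]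
        field_simp
      rw [h3]
      gcongr
    linarith
  obtain ⟨S, hS⟩ := exists_le_of_le_Ex hπ hsum
  have hsub : left H (D * b) S ⊆ H := Finset.filter_subset _ _
  have hlin : IsLinear k (left H (D * b) S) :=
    ⟨fun e he => hH.1 e (hsub he), fun e he f hf => hH.2 e (hsub he) f (hsub hf)⟩
  obtain ⟨M, hM, hMd, hMc⟩ := hg (D * b) ((div_le_iff₀ hb0).1 hDb) α _ hlin
    (deg_left_le (by positivity) S)
  have hcross : ∀ e ∈ picked H S, ∀ f ∈ M, Disjoint e f := by
    intro e he f hf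
    have hfs := (Finset.mem_filter.1 (hM hf)).2.1
    have hes := Finset.mem_filter.1 he
    by_contra hd
    refine Finset.disjoint_left.1 hfs ?_ hes.2.1
    simpa [meet] using ⟨hes.1, hd⟩
  refine ⟨picked H S ∪ M, Finset.union_subset (Finset.filter_subset _ _) (hM.trans hsub),
    ?_, ?_⟩
  · intro e he f hf hef
    rcases Finset.mem_union.1 he with he | he <;> rcases Finset.mem_union.1 hf with hf | hf
    · by_contra hd
      have hes := Finset.mem_filter.1 he
      have hfs := Finset.mem_filter.1 hf
      exact hfs.2.2 e hes.1 hef hd hes.2.1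
    · exact hcross e he f hf
    · exact (hcross f hf e he).symm
    · exact hMd e he f hf hef
  · have hdis : Disjoint (picked H S) M := by
      rw [Finset.disjoint_left]
      intro e he he'
      have h1 := hcross e he e he'
      rw [disjoint_self, Finset.bot_eq_empty] at h1
      have h2 := hH.1 e (Finset.filter_subset _ _ he)
      rw [h1, Finset.card_empty] at h2
      omega
    rw [Finset.card_union_of_disjoint hdis]
    push_cast
    have h1 : c / (D * b) * ((left H (D * b) S).card : ℝ) ≤ M.card := by
      rw [div_mul_eq_mul_div, div_le_iff₀ (by positivity)]
      exact hMc
    rw [div_le_iff₀ hD0] at hS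
    exact hS.trans (mul_le_mul_of_nonneg_right (by linarith) hD0.le)

/-- Linear uniform hypergraphs have matchings of nearly `|H| / D` edges. A fixed small bite
improves every constant up to `c₀ < 1` by a fixed amount, so finitely many bites reach `c₀`. -/
theorem good_of_lt_one {k : ℕ} (hk : 1 ≤ k) {c₀ : ℝ} (h0 : 0 ≤ c₀) (h1 : c₀ < 1) :
    Good k c₀ := by
  have hk0 : (1 : ℝ) ≤ k := by exact_mod_cast hk
  set η : ℝ := (1 - c₀) / (2 * k) with hη
  have hη0 : 0 < η := div_pos (by linarith) (by positivity)
  have hkη : k * η = (1 - c₀) / 2 := by rw [hη]; field_simp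
  have hη1 : η < 1 := by nlinarith
  -- one bite gains `η (1 - k η - c) ≥ η (1 - c₀) / 2` over any constant `c ≤ c₀`
  set g := η * ((1 - c₀) / 4) with hg
  have hg0 : 0 < g := mul_pos hη0 (by linarith)
  have key : ∀ n : ℕ, Good k (min (n * g) c₀) := by
    intro n
    induction n with
    | zero =>
      refine ⟨0, fun D hD α H _ _ => ⟨∅, by simp, by simp, ?_⟩⟩
      simp [h0]
    | succ n ih =>
      have hm : min ((n : ℝ) * g) c₀ ≤ c₀ := min_le_right _ _
      refine Good.step hk (le_min (by positivity) h0) hη0 hη1 ?_ ih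
      have h3 : min (((n + 1 : ℕ) : ℝ) * g) c₀ ≤ min ((n : ℝ) * g) c₀ + g := by
        rw [← min_add_add_right]
        refine min_le_min ?_ (by linarith)
        push_cast; linarith
      rw [hkη]
      have h4 : 0 ≤ η * (c₀ - min ((n : ℝ) * g) c₀) := mul_nonneg hη0.le (by linarith)
      nlinarith
  obtain ⟨n, hn⟩ := exists_nat_ge (c₀ / g)
  have := key n
  rwa [min_eq_right ((div_le_iff₀ hg0).1 hn)] at this

/-! ### Coloured graphs as hypergraphs -/

variable {V K : Type}

/-- The hyperedge on the vertex set `V ⊕ K` formed by the ends of `e` and its colours. -/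
noncomputable def hyp (c : Sym2 V → Finset K) (e : Sym2 V) : Finset (V ⊕ K) :=
  e.toFinset.disjSum (c e)

@[simp] lemma inl_mem_hyp (c : Sym2 V → Finset K) (e : Sym2 V) (v : V) :
    Sum.inl v ∈ hyp c e ↔ v ∈ e := by simp [hyp]

@[simp] lemma inr_mem_hyp (c : Sym2 V → Finset K) (e : Sym2 V) (x : K) :
    Sum.inr x ∈ hyp c e ↔ x ∈ c e := by simp [hyp]

lemma hyp_injective (c : Sym2 V → Finset K) : Function.Injective (hyp c) := by
  intro e f h
  refine Sym2.ext fun v => ?_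
  rw [← inl_mem_hyp c, h, inl_mem_hyp]

/-- `hyp c` as an embedding. -/
noncomputable def hypEmb (c : Sym2 V → Finset K) : Sym2 V ↪ Finset (V ⊕ K) :=
  ⟨hyp c, hyp_injective c⟩

lemma isLinear_map_hyp {t : ℕ} {E : Finset (Sym2 V)} {c : Sym2 V → Finset K}
    (hE : ∀ e ∈ E, ¬ e.IsDiag) (hc : ∀ e ∈ E, (c e).card = t)
    (hproper : ∀ e ∈ E, ∀ e' ∈ E, e ≠ e' → (∃ v, v ∈ e ∧ v ∈ e') → Disjoint (c e) (c e'))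
    (hlin : ∀ e ∈ E, ∀ e' ∈ E, e ≠ e' → (c e ∩ c e').card ≤ 1) :
    IsLinear (t + 2) (E.map (hypEmb c)) := by
  constructor
  · intro e' he'
    obtain ⟨e, he, rfl⟩ := Finset.mem_map.1 he'
    change (hyp c e).card = _
    rw [hyp, Finset.card_disjSum, Sym2.card_toFinset_of_not_isDiag e (hE e he), hc e he, add_comm]
  · intro e' he' f' hf'
    obtain ⟨e, he, rfl⟩ := Finset.mem_map.1 he'
    obtain ⟨f, hf, rfl⟩ := Finset.mem_map.1 hf'
    intro x y hxe hye hxf hyf hxy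
    change x ∈ hyp c e at hxe
    change y ∈ hyp c e at hye
    change x ∈ hyp c f at hxf
    change y ∈ hyp c f at hyf
    by_contra hne
    have hef : e ≠ f := fun h => hne (by rw [h])
    rcases x with v | a <;> rcases y with w | b <;>
      simp only [inl_mem_hyp, inr_mem_hyp] at hxe hye hxf hyf
    · have hvw : v ≠ w := fun h => hxy (by rw [h])
      exact hef (((Sym2.mem_and_mem_iff hvw).1 ⟨hxe, hye⟩).trans
        ((Sym2.mem_and_mem_iff hvw).1 ⟨hxf, hyf⟩).symm)
    · exact Finset.disjoint_left.1 (hproper e he f hf hef ⟨v, hxe, hxf⟩) hye hyf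
    · exact Finset.disjoint_left.1 (hproper e he f hf hef ⟨w, hye, hyf⟩) hxe hxf
    · have := Finset.card_le_one.1 (hlin e he f hf hef) a (Finset.mem_inter.2 ⟨hxe, hxf⟩) b
        (Finset.mem_inter.2 ⟨hye, hyf⟩)
      exact hxy (by rw [this])

lemma deg_map_hyp (E : Finset (Sym2 V)) (c : Sym2 V → Finset K) (x : V ⊕ K) :
    deg (E.map (hypEmb c)) x = (E.filter (fun e => x ∈ hyp c e)).card := by
  rw [deg, ← Finset.card_map (hypEmb c)]
  congr 1
  ext f
  simp only [Finset.mem_filter, Finset.mem_map]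
  constructor
  · rintro ⟨⟨e, he, rfl⟩, hx⟩; exact ⟨e, ⟨he, hx⟩, rfl⟩
  · rintro ⟨e, ⟨he, hx⟩, rfl⟩; exact ⟨⟨e, he, rfl⟩, hx⟩

lemma card_uncovered [Fintype V] (M : Finset (Sym2 V)) (hM : ∀ e ∈ M, ¬ e.IsDiag)
    (hd : ∀ e ∈ M, ∀ e' ∈ M, e ≠ e' → ∀ v : V, ¬ (v ∈ e ∧ v ∈ e')) :
    (Finset.univ.filter (fun v : V => ¬ ∃ e ∈ M, v ∈ e)).card + M.card * 2 =
      Fintype.card V := by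
  have h1 : (M.biUnion Sym2.toFinset).card = M.card * 2 := by
    rw [Finset.card_biUnion, Finset.sum_const_nat]
    · intro e he; exact Sym2.card_toFinset_of_not_isDiag e (hM e he)
    · intro e he f hf hef
      refine Finset.disjoint_left.2 fun v hv hv' => ?_
      exact hd e he f hf hef v ⟨by simpa using hv, by simpa using hv'⟩
  have h2 : Finset.univ.filter (fun v : V => ¬ ∃ e ∈ M, v ∈ e) =
      (M.biUnion Sym2.toFinset)ᶜ := by
    ext v; simp
  rw [h2, ← h1, Finset.card_compl_add_card]

end

end Nibble


open scoped Classical in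
/-- Corollary 3.3: for any `t` and `ε > 0` there is `d₀` such that for all
`d ≥ d₀`, every graph with a proper linear `t`-fold edge colouring in which
every vertex has degree `(1 ± ε)d` and every colour has degree at most
`(1 + ε)d` has a rainbow matching covering all but at most `4ε|V(G)|`
vertices. -/
theorem approximate_rainbow_matching (t : ℕ) (ε : ℝ) (hε : 0 < ε) :
    ∃ d₀ : ℝ, ∀ d : ℝ, d₀ ≤ d →
    ∀ (V K : Type) [Fintype V] [DecidableEq V] [DecidableEq K]
      (G : SimpleGraph V) [DecidableRel G.Adj] (c : Sym2 V → Finset K),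
      -- `t`-fold colouring
      (∀ e ∈ G.edgeFinset, (c e).card = t) →
      -- properness: edges sharing a vertex have disjoint colour sets
      (∀ e ∈ G.edgeFinset, ∀ e' ∈ G.edgeFinset, e ≠ e' →
        (∃ v, v ∈ e ∧ v ∈ e') → Disjoint (c e) (c e')) →
      -- linearity: any two colours appear together on at most one edge
      (∀ e ∈ G.edgeFinset, ∀ e' ∈ G.edgeFinset, e ≠ e' → (c e ∩ c e').card ≤ 1) →
      -- every vertex has degree (1 ± ε) d
      (∀ v : V, (1 - ε) * d ≤ (G.degree v : ℝ) ∧ (G.degree v : ℝ) ≤ (1 + ε) * d) →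
      -- every colour has degree at most (1 + ε) d
      (∀ k : K, ((G.edgeFinset.filter (fun e => k ∈ c e)).card : ℝ) ≤ (1 + ε) * d) →
      -- a rainbow matching covering all but at most 4ε|V| vertices
      ∃ M ⊆ G.edgeFinset,
        (∀ e ∈ M, ∀ e' ∈ M, e ≠ e' →
          (∀ v : V, ¬ (v ∈ e ∧ v ∈ e')) ∧ Disjoint (c e) (c e')) ∧
        (((Finset.univ.filter (fun v : V => ¬ ∃ e ∈ M, v ∈ e)).card : ℝ) ≤
          4 * ε * Fintype.card V) := by
  rcases le_or_gt (1 / 4) ε with hε4 | hε4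
  · refine ⟨0, fun d _ V K _ _ _ G _ c _ _ _ _ _ => ⟨∅, by simp, by simp, ?_⟩⟩
    have h1 : ((Finset.univ.filter
        (fun v : V => ¬ ∃ e ∈ (∅ : Finset (Sym2 V)), v ∈ e)).card : ℝ) ≤ Fintype.card V :=
      Nat.cast_le.2 (Finset.card_le_univ _)
    have h2 : (0 : ℝ) ≤ Fintype.card V := Nat.cast_nonneg _
    nlinarith
  obtain ⟨D₀, hD₀⟩ := Nibble.good_of_lt_one (k := t + 2) (by omega) (c₀ := 1 - ε)
    (by linarith) (by linarith)
  refine ⟨max 1 D₀, fun d hd V K _ _ _ G _ c hc hproper hlin hdeg hcol => ?_⟩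
  rw [max_le_iff] at hd
  obtain ⟨hd1, hd0⟩ := hd
  have hE : ∀ e ∈ G.edgeFinset, ¬ e.IsDiag := fun e he =>
    G.not_isDiag_of_mem_edgeSet (SimpleGraph.mem_edgeFinset.1 he)
  have hH := Nibble.isLinear_map_hyp hE hc hproper (by convert hlin)
  obtain ⟨M', hM'sub, hM'd, hM'c⟩ := hD₀ ((1 + ε) * d) (by nlinarith) (V ⊕ K) _ hH (by
    rintro (v | x)
    · rw [Nibble.deg_map_hyp]
      refine le_trans (le_of_eq ?_) (hdeg v).2
      rw [← SimpleGraph.card_incidenceFinset_eq_degree, SimpleGraph.incidenceFinset_eq_filter]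
      norm_cast
      congr 1
      ext e; simp
    · rw [Nibble.deg_map_hyp]
      refine le_trans (le_of_eq ?_) (hcol x)
      norm_cast
      congr 1
      ext e; simp)
  set M := G.edgeFinset.filter (fun e => Nibble.hyp c e ∈ M') with hM
  have hMsub : M ⊆ G.edgeFinset := Finset.filter_subset _ _
  have hMM : ∀ e ∈ M, ∀ e' ∈ M, e ≠ e' →
      (∀ v : V, ¬ (v ∈ e ∧ v ∈ e')) ∧ Disjoint (c e) (c e') := by
    intro e he f hf hef
    have h := hM'd _ (Finset.mem_filter.1 he).2 _ (Finset.mem_filter.1 hf).2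
      (fun h => hef (Nibble.hyp_injective c h))
    rw [Finset.disjoint_left] at h
    refine ⟨fun v hv => h (a := Sum.inl v) (by simpa using hv.1) (by simpa using hv.2), ?_⟩
    rw [Finset.disjoint_left]
    exact fun x hx hx' => h (a := Sum.inr x) (by simpa using hx) (by simpa using hx')
  have hcard : M.card = M'.card := by
    rw [← Finset.card_map (Nibble.hypEmb c)]
    congr 1
    ext f
    simp only [hM, Finset.mem_map, Finset.mem_filter]
    constructor
    · rintro ⟨e, he, rfl⟩; exact he.2
    · intro hf
      obtain ⟨e, he, rfl⟩ := Finset.mem_map.1 (hM'sub hf)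
      exact ⟨e, ⟨he, hf⟩, rfl⟩
  refine ⟨M, hMsub, hMM, ?_⟩
  have hunc := Nibble.card_uncovered M (fun e he => hE e (hMsub he))
    (fun e he f hf hef => (hMM e he f hf hef).1)
  have hunc' : ((Finset.univ.filter (fun v : V => ¬ ∃ e ∈ M, v ∈ e)).card : ℝ) + M.card * 2 =
      Fintype.card V := by
    rw [← hunc]; push_cast; congr!
  rw [Finset.card_map, ← hcard] at hM'c
  have hEc : (1 - ε) * d * Fintype.card V ≤ 2 * (G.edgeFinset.card : ℝ) := by
    have h1 : ∑ v : V, (G.degree v : ℝ) = 2 * (G.edgeFinset.card : ℝ) := by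
      exact_mod_cast G.sum_degrees_eq_twice_card_edges
    rw [← h1, mul_comm, ← nsmul_eq_mul]
    exact Finset.card_nsmul_le_sum _ _ _ fun v _ => (hdeg v).1
  set n : ℝ := (Fintype.card V : ℝ)
  set m : ℝ := (M.card : ℝ)
  have hn : 0 ≤ n := Nat.cast_nonneg _
  have h1 : (1 - ε) ^ 2 * n ≤ 2 * m * (1 + ε) := by
    refine le_of_mul_le_mul_right ?_ (by linarith : 0 < d)
    have := mul_le_mul_of_nonneg_left hEc (by linarith : 0 ≤ 1 - ε)
    linarith
  have h2 : (1 - 4 * ε) * n ≤ 2 * m := by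
    refine le_of_mul_le_mul_right ?_ (by linarith : 0 < 1 + ε)
    have : 0 ≤ (ε + 5 * ε ^ 2) * n := by positivity
    linarith
  linarith
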